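/- Let A be a simple rational polyomino, and let B and D₁,…,D_r be pairwise disjoint subsets of the interior of A, each of which is either a simple rational polyomino or a singleton. Then for any rational ρ with ℒ(B) < ρ < ℒ(A \ ⋃ᵢDᵢ), there exists a simple rational polyomino C with ℒ(C) = ρ and B ⊂ C ⊂ A° \ ⋃ᵢDᵢ. -/

import Mathlib

open Set MeasureTheory

/-- A closed axis-parallel rectangle in ℝ² with rational corners (nondegenerate). -/
def IsRatRect (R : Set (ℝ × ℝ)) : Prop :=
  ∃ a b c d : ℚ, a < b ∧ c < d ∧ R = Icc (a : ℝ) (b : ℝ) ×ˢ Icc (c : ℝ) (d : ℝ)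

/-- A rational polyomino: a union of finitely many closed rational rectangles. -/
def IsRatPolyomino (P : Set (ℝ × ℝ)) : Prop :=
  ∃ (n : ℕ) (R : Fin n → Set (ℝ × ℝ)), (∀ i, IsRatRect (R i)) ∧ P = ⋃ i, R i

/-- A simple rational polyomino: both its interior and its complement are connected. -/
def IsSimpleRatPolyomino (P : Set (ℝ × ℝ)) : Prop :=
  IsRatPolyomino P ∧ IsConnected (interior P) ∧ IsConnected Pᶜ

open Topology


lemma ind_contAt {O : Set (ℝ × ℝ)} (ψ : (ℝ × ℝ) → ℝ) (hψ : Continuous ψ) (x : ℝ × ℝ)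
    (h : O ∈ 𝓝 x ∨ Oᶜ ∈ 𝓝 x ∨ ψ x = 0) : ContinuousAt (O.indicator ψ) x := by
  rcases h with h | h | h
  · refine hψ.continuousAt.congr ?_
    filter_upwards [h] with y hy
    simp [hy]
  · refine (continuousAt_const (y := (0:ℝ))).congr ?_
    filter_upwards [h] with y hy
    simp only [mem_compl_iff] at hy
    simp [hy]
  · have h0 : O.indicator ψ x = 0 := by
      by_cases hx : x ∈ O <;> simp [hx, h]
    unfold ContinuousAt
    rw [h0]
    have := (hψ.norm.continuousAt (x := x)).tendsto
    rw [h, norm_zero] at this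
    exact squeeze_zero_norm (fun y => norm_indicator_le_norm_self ψ y) this

lemma int_const {S : Set (ℝ × ℝ)} (hS : IsPreconnected S) (f : ℝ × ℝ → ℝ) (hf : ContinuousOn f S)
    (hi : ∀ x ∈ S, ∃ n : ℤ, f x = n) {x y : ℝ × ℝ} (hx : x ∈ S) (hy : y ∈ S) : f x = f y := by
  have h1 : IsPreconnected (f '' S) := hS.image f hf
  by_contra hne
  obtain ⟨n, hn⟩ := hi x hx
  obtain ⟨m, hm⟩ := hi y hy
  have key : ∀ n m : ℤ, (n:ℝ) < m → (n:ℝ) ∈ f '' S → (m:ℝ) ∈ f '' S → False := by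
    intro n m hnm h1' h2'
    have h3 : (n:ℝ) + 1/2 ∈ f '' S := by
      apply h1.ordConnected.out h1' h2'
      have : (n:ℝ) + 1 ≤ m := by exact_mod_cast hnm
      constructor <;> linarith
    obtain ⟨z, hz, hz'⟩ := h3
    obtain ⟨k, hk⟩ := hi z hz
    rw [hk] at hz'
    have : (2 * k : ℝ) = 2 * n + 1 := by linarith
    have : 2 * k = 2 * n + 1 := by exact_mod_cast this
    omega
  rw [hn, hm] at hne
  have a1 : (n:ℝ) ∈ f '' S := ⟨x, hx, hn⟩
  have a2 : (m:ℝ) ∈ f '' S := ⟨y, hy, hm⟩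
  rcases lt_or_gt_of_ne hne with h | h
  · exact key _ _ h a1 a2
  · exact key _ _ h a2 a1

lemma unico {U V : Set (ℝ × ℝ)} (hU : IsOpen U) (hV : IsOpen V) (cU : IsPreconnected U)
    (cV : IsPreconnected V) (hUV : U ∪ V = univ) : IsPreconnected (U ∩ V) := by
  intro u v hu hv huv hne1 hne2
  by_contra hcon
  rw [not_nonempty_iff_eq_empty] at hcon
  obtain ⟨x1, hx1, hx1u⟩ := hne1
  obtain ⟨x2, hx2, hx2v⟩ := hne2
  set O := U ∩ V ∩ u with hO
  have hOo : IsOpen O := (hU.inter hV).inter hu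
  have hO2 : IsOpen (U ∩ V ∩ v) := (hU.inter hV).inter hv
  have hdisj : ∀ x, x ∈ U ∩ V ∩ v → x ∉ O := by
    intro x hx hx'
    have : x ∈ U ∩ V ∩ (u ∩ v) := ⟨hx.1, hx'.2, hx.2⟩
    rw [hcon] at this
    exact this
  have hcov : ∀ x, x ∈ U ∪ V := fun x => hUV ▸ mem_univ x
  obtain ⟨φ, h0, h1, -⟩ := exists_continuous_zero_one_of_isClosed hV.isClosed_compl
    hU.isClosed_compl (by
      rw [disjoint_left]; intro x hx hx'
      rcases hcov x with h | h
      · exact hx' h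
      · exact hx h)
  set α := O.indicator φ with hα
  set β := O.indicator (fun x => φ x - 1) with hβ
  have hαβ : ∀ x, α x = β x ∨ α x = β x + 1 := by
    intro x
    by_cases hx : x ∈ O
    · right; simp [hα, hβ, hx]
    · left; simp [hα, hβ, hx]
  have case3 : ∀ x, x ∈ U ∩ V → O ∈ 𝓝 x ∨ Oᶜ ∈ 𝓝 x := by
    intro x hx
    rcases huv hx with h | h
    · left; exact hOo.mem_nhds ⟨hx, h⟩
    · right
      filter_upwards [hO2.mem_nhds ⟨hx, h⟩] with y hy
      exact hdisj y hy
  have cα : ∀ x ∈ U, ContinuousAt α x := by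
    intro x hx
    apply ind_contAt _ φ.continuous
    by_cases hxV : x ∈ V
    · rcases case3 x ⟨hx, hxV⟩ with h | h
      · left; exact h
      · right; left; exact h
    · right; right; exact h0 hxV
  have cβ : ∀ x ∈ V, ContinuousAt β x := by
    intro x hx
    apply ind_contAt _ (by fun_prop)
    by_cases hxU : x ∈ U
    · rcases case3 x ⟨hxU, hx⟩ with h | h
      · left; exact h
      · right; left; exact h
    · right; right; have := h1 hxU; simp at this; simp [this]
  have hco : ∀ x, ((α x : ℝ) : AddCircle (1:ℝ)) = ((β x : ℝ) : AddCircle (1:ℝ)) := by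
    intro x
    rcases hαβ x with h | h
    · rw [h]
    · rw [h, AddCircle.coe_add, AddCircle.coe_period, add_zero]
  have cF : Continuous (fun x => ((α x : ℝ) : AddCircle (1:ℝ))) := by
    rw [continuous_iff_continuousAt]
    intro x
    rcases hcov x with h | h
    · exact ContinuousAt.comp (g := fun y : ℝ => (y : AddCircle (1:ℝ)))
        (AddCircle.continuous_mk' 1).continuousAt (cα x h)
    · have : (fun x => ((α x : ℝ) : AddCircle (1:ℝ))) = (fun x => ((β x : ℝ) : AddCircle (1:ℝ))) :=
        funext hco
      rw [this]
      exact ContinuousAt.comp (g := fun y : ℝ => (y : AddCircle (1:ℝ)))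
        (AddCircle.continuous_mk' 1).continuousAt (cβ x h)
  have : Fact ((0:ℝ) < 1) := ⟨one_pos⟩
  have hcm : IsCoveringMap ((↑) : ℝ → AddCircle (1:ℝ)) := AddCircle.isCoveringMap_coe 1
  obtain ⟨g, ⟨-, hg⟩, -⟩ := hcm.existsUnique_continuousMap_lifts
    (⟨_, cF⟩ : C(ℝ × ℝ, AddCircle (1:ℝ))) x1 (α x1) rfl
  have hg' : ∀ x, ((g x : ℝ) : AddCircle (1:ℝ)) = ((α x : ℝ) : AddCircle (1:ℝ)) :=
    fun x => congrFun hg x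
  have hint : ∀ a b : ℝ, (a : AddCircle (1:ℝ)) = (b : AddCircle (1:ℝ)) → ∃ n : ℤ, a - b = n := by
    intro a b hab
    rw [← sub_eq_zero, ← AddCircle.coe_sub, AddCircle.coe_eq_zero_iff] at hab
    obtain ⟨n, hn⟩ := hab
    exact ⟨n, by rw [← hn]; simp⟩
  have e1 := int_const cU (fun x => g x - α x)
    (fun x hx => (g.continuous.continuousAt.sub (cα x hx)).continuousWithinAt)
    (fun x _ => hint _ _ (hg' x)) hx1.1 hx2.1
  have e2 := int_const cV (fun x => g x - β x)
    (fun x hx => (g.continuous.continuousAt.sub (cβ x hx)).continuousWithinAt)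
    (fun x _ => hint _ _ ((hg' x).trans (hco x))) hx1.2 hx2.2
  have m1 : x1 ∈ O := ⟨hx1, hx1u⟩
  have m2 : x2 ∉ O := hdisj x2 ⟨hx2, hx2v⟩
  simp [hα, hβ, m1, m2] at e1 e2
  linarith


lemma IsRatRect.closed {R : Set (ℝ × ℝ)} (h : IsRatRect R) : IsClosed R := by
  obtain ⟨a, b, c, d, -, -, rfl⟩ := h
  exact isClosed_Icc.prod isClosed_Icc

lemma IsRatRect.cvx {R : Set (ℝ × ℝ)} (h : IsRatRect R) : Convex ℝ R := by
  obtain ⟨a, b, c, d, -, -, rfl⟩ := h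
  exact (convex_Icc _ _).prod (convex_Icc _ _)

lemma IsRatRect.reg {R : Set (ℝ × ℝ)} (h : IsRatRect R) : R ⊆ closure (interior R) := by
  obtain ⟨a, b, c, d, h1, h2, rfl⟩ := h
  have h1' : (a:ℝ) ≠ b := by exact_mod_cast h1.ne
  have h2' : (c:ℝ) ≠ d := by exact_mod_cast h2.ne
  rw [interior_prod_eq, interior_Icc, interior_Icc, closure_prod_eq, closure_Ioo h1',
    closure_Ioo h2']

lemma IsRatPolyomino.closed {P : Set (ℝ × ℝ)} (h : IsRatPolyomino P) : IsClosed P := by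
  obtain ⟨n, R, hR, rfl⟩ := h
  exact isClosed_iUnion_of_finite (fun i => (hR i).closed)

lemma IsRatPolyomino.reg {P : Set (ℝ × ℝ)} (h : IsRatPolyomino P) :
    P ⊆ closure (interior P) := by
  obtain ⟨n, R, hR, rfl⟩ := h
  refine iUnion_subset fun i => (hR i).reg.trans (closure_mono (interior_mono ?_))
  exact subset_iUnion R i

lemma IsRatPolyomino.null {P : Set (ℝ × ℝ)} (h : IsRatPolyomino P) :
    volume (P \ interior P) = 0 := by
  obtain ⟨n, R, hR, rfl⟩ := h
  have : (⋃ i, R i) \ interior (⋃ i, R i) ⊆ ⋃ i, frontier (R i) := by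
    rintro x ⟨hx, hx'⟩
    obtain ⟨i, hi⟩ := mem_iUnion.1 hx
    refine mem_iUnion.2 ⟨i, ?_⟩
    rw [(hR i).closed.frontier_eq]
    exact ⟨hi, fun h => hx' (interior_mono (subset_iUnion R i) h)⟩
  refine measure_mono_null this (measure_iUnion_null fun i => ?_)
  exact (hR i).cvx.addHaar_frontier volume

lemma IsRatPolyomino.union_rect {P R : Set (ℝ × ℝ)} (h : IsRatPolyomino P) (hR : IsRatRect R) :
    IsRatPolyomino (P ∪ R) := by
  obtain ⟨n, S, hS, rfl⟩ := h
  refine ⟨n + 1, Fin.cons R S, ?_, ?_⟩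
  · intro i
    refine Fin.cases ?_ ?_ i
    · simpa using hR
    · intro j; simpa using hS j
  · ext x
    simp only [mem_union, mem_iUnion, Fin.exists_fin_succ, Fin.cons_zero, Fin.cons_succ]
    tauto

lemma IsRatRect.poly {R : Set (ℝ × ℝ)} (h : IsRatRect R) : IsRatPolyomino R :=
  ⟨1, fun _ => R, fun _ => h, by simp [iUnion_const]⟩

def qrect (x : ℚ × ℚ × ℚ × ℚ) : Set (ℝ × ℝ) :=
  Icc (x.1 : ℝ) (x.2.1 : ℝ) ×ˢ Icc (x.2.2.1 : ℝ) (x.2.2.2 : ℝ)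

lemma qrect_vol (x : ℚ × ℚ × ℚ × ℚ) : ∃ v : ℚ, (volume (qrect x)).toReal = v := by
  refine ⟨max (x.2.1 - x.1) 0 * max (x.2.2.2 - x.2.2.1) 0, ?_⟩
  rw [qrect, Measure.volume_eq_prod, Measure.prod_prod, Real.volume_Icc, Real.volume_Icc,
    ENNReal.toReal_mul, ENNReal.toReal_ofReal', ENNReal.toReal_ofReal']
  push_cast
  rfl

lemma qrect_inter (x y : ℚ × ℚ × ℚ × ℚ) : ∃ z, qrect x ∩ qrect y = qrect z := by
  refine ⟨(max x.1 y.1, min x.2.1 y.2.1, max x.2.2.1 y.2.2.1, min x.2.2.2 y.2.2.2), ?_⟩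
  simp only [qrect, prod_inter_prod, Icc_inter_Icc, Rat.cast_max, Rat.cast_min]

lemma qrect_compact (x) : IsCompact (qrect x) := isCompact_Icc.prod isCompact_Icc

lemma qrect_list_compact (l : List (ℚ × ℚ × ℚ × ℚ)) : IsCompact (⋃ x ∈ l, qrect x) := by
  induction l with
  | nil => simp
  | cons a l ih =>
    simp only [List.mem_cons, iUnion_iUnion_eq_or_left]
    exact (qrect_compact a).union ih

lemma qrect_list_vol (n : ℕ) : ∀ l : List (ℚ × ℚ × ℚ × ℚ), l.length = n →
    ∃ v : ℚ, (volume (⋃ x ∈ l, qrect x)).toReal = v := by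
  induction n with
  | zero =>
    intro l hl
    rw [List.length_eq_zero_iff] at hl
    subst hl
    exact ⟨0, by simp⟩
  | succ n ih =>
    intro l hl
    match l, hl with
    | a :: l, hl =>
      simp only [List.length_cons, Nat.add_right_cancel_iff] at hl
      obtain ⟨v, hv⟩ := ih l hl
      obtain ⟨w, hw⟩ := qrect_vol a
      choose z hz using qrect_inter a
      obtain ⟨t, ht⟩ := ih (l.map z) (by simpa using hl)
      have e1 : (⋃ x ∈ a :: l, qrect x) = qrect a ∪ ⋃ x ∈ l, qrect x := by
        simp only [List.mem_cons, iUnion_iUnion_eq_or_left]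
      have e2 : (⋃ x ∈ l.map z, qrect x) = qrect a ∩ ⋃ x ∈ l, qrect x := by
        simp only [List.mem_map, inter_iUnion₂, hz]
        ext p
        simp only [mem_iUnion, exists_prop]
        constructor
        · rintro ⟨_, ⟨y, hy, rfl⟩, hp⟩
          exact ⟨y, hy, hp⟩
        · rintro ⟨y, hy, hp⟩
          exact ⟨_, ⟨y, hy, rfl⟩, hp⟩
      have h3 := measure_union_add_inter (μ := volume) (qrect a)
        (qrect_list_compact l).measurableSet
      rw [← e1, ← e2] at h3
      have h4 := congrArg ENNReal.toReal h3
      rw [ENNReal.toReal_add (qrect_list_compact _).measure_lt_top.ne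
        (qrect_list_compact _).measure_lt_top.ne,
        ENNReal.toReal_add (qrect_compact _).measure_lt_top.ne
        (qrect_list_compact _).measure_lt_top.ne, hv, hw, ht] at h4
      refine ⟨w + v - t, ?_⟩
      push_cast
      linarith

lemma IsRatPolyomino.vol {P : Set (ℝ × ℝ)} (h : IsRatPolyomino P) :
    ∃ v : ℚ, 0 ≤ v ∧ volume P = ENNReal.ofReal v := by
  obtain ⟨n, R, hR, rfl⟩ := h
  choose a b c d h1 h2 h3 using hR
  have e : (⋃ i, R i) = ⋃ x ∈ List.ofFn (fun i => (a i, b i, c i, d i)), qrect x := by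
    ext p
    simp only [mem_iUnion, List.mem_ofFn, exists_prop]
    constructor
    · rintro ⟨i, hi⟩
      exact ⟨_, ⟨i, rfl⟩, by rw [h3] at hi; exact hi⟩
    · rintro ⟨_, ⟨i, rfl⟩, hi⟩
      exact ⟨i, by rw [h3]; exact hi⟩
  obtain ⟨v, hv⟩ := qrect_list_vol _ (List.ofFn (fun i => (a i, b i, c i, d i))) rfl
  rw [← e] at hv
  have hv0 : (0:ℝ) ≤ v := hv ▸ ENNReal.toReal_nonneg
  refine ⟨v, by exact_mod_cast hv0, ?_⟩
  rw [← hv, ENNReal.ofReal_toReal]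
  rw [e]
  exact (qrect_list_compact _).measure_lt_top.ne

/-- attaching lemma for the complement -/
lemma compl_attach {V R N : Set (ℝ × ℝ)} (hV : IsOpen V) (cV : IsPreconnected V)
    (hR : IsClosed R) (hN : IsOpen N) (hRN : R ∩ V ⊆ N) (hNV : N ⊆ V)
    (cN : IsPreconnected (N \ R)) :
    IsPreconnected (V \ R) := by
  intro u v hu hv huv hne1 hne2
  by_contra hcon
  rw [not_nonempty_iff_eq_empty] at hcon
  -- main claim
  have key : ∀ u v : Set (ℝ × ℝ), IsOpen u → IsOpen v → V \ R ⊆ u ∪ v →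
      ((V \ R) ∩ u).Nonempty → ((V \ R) ∩ v).Nonempty → (V \ R) ∩ (u ∩ v) = ∅ →
      N \ R ⊆ u → False := by
    intro u v hu hv huv hne1 hne2 hcon hs
    have hVR : IsOpen (V \ R) := hV.sdiff hR
    have := cV (((V \ R) ∩ u) ∪ N) ((V \ R) ∩ v) ((hVR.inter hu).union hN)
      (hVR.inter hv) ?_ ?_ ?_
    · obtain ⟨x, hxV, h1, h2⟩ := this
      have hxu : x ∈ u := by
        rcases h1 with h1 | h1
        · exact h1.2
        · exact hs ⟨h1, h2.1.2⟩
      have : x ∈ (V \ R) ∩ (u ∩ v) := ⟨h2.1, hxu, h2.2⟩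
      rw [hcon] at this
      exact this
    · intro x hx
      by_cases hxR : x ∈ R
      · left; right; exact hRN ⟨hxR, hx⟩
      · rcases huv ⟨hx, hxR⟩ with h | h
        · left; left; exact ⟨⟨hx, hxR⟩, h⟩
        · right; exact ⟨⟨hx, hxR⟩, h⟩
    · obtain ⟨x, hx, hx'⟩ := hne1
      exact ⟨x, hx.1, Or.inl ⟨hx, hx'⟩⟩
    · obtain ⟨x, hx, hx'⟩ := hne2
      exact ⟨x, hx.1, hx, hx'⟩
  have hsub : N \ R ⊆ V \ R := sdiff_subset_sdiff_left hNV
  rcases isPreconnected_iff_subset_of_disjoint.1 cN u v hu hv (hsub.trans huv) (by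
    rw [eq_empty_iff_forall_notMem] at hcon ⊢
    exact fun x hx => hcon x ⟨hsub hx.1, hx.2⟩) with h | h
  · exact key u v hu hv huv hne1 hne2 hcon h
  · exact key v u hv hu (by rwa [union_comm]) hne2 hne1 (by rwa [inter_comm v u]) h

lemma rect_conn (a b c d : ℝ) : IsPreconnected (Ioo a b ×ˢ Ioo c d : Set (ℝ × ℝ)) :=
  isPreconnected_Ioo.prod isPreconnected_Ioo

lemma ushape {q m c d δ : ℝ} (hqm : q < m) (hcd : c < d) (hδ : 0 < δ) :
    IsPreconnected ((Ioo q (m + δ) ×ˢ Ioo (c - δ) (d + δ)) \ (Icc q m ×ˢ Icc c d) :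
      Set (ℝ × ℝ)) := by
  have e : ((Ioo q (m + δ) ×ˢ Ioo (c - δ) (d + δ)) \ (Icc q m ×ˢ Icc c d) : Set (ℝ × ℝ)) =
      ((Ioo q (m + δ) ×ˢ Ioo (c - δ) c) ∪ (Ioo m (m + δ) ×ˢ Ioo (c - δ) (d + δ))) ∪
        (Ioo q (m + δ) ×ˢ Ioo d (d + δ)) := by
    ext ⟨x, y⟩
    simp only [mem_sdiff, mem_prod, mem_Ioo, mem_Icc, mem_union]
    constructor
    · rintro ⟨⟨⟨h1, h2⟩, h3, h4⟩, h5⟩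
      by_cases hy : y < c
      · left; left; exact ⟨⟨h1, h2⟩, h3, hy⟩
      · by_cases hy' : d < y
        · right; exact ⟨⟨h1, h2⟩, hy', h4⟩
        · left; right
          refine ⟨⟨?_, h2⟩, h3, h4⟩
          by_contra hx
          exact h5 ⟨⟨h1.le, not_lt.1 hx⟩, not_lt.1 hy, not_lt.1 hy'⟩
    · rintro ((⟨⟨h1, h2⟩, h3, h4⟩ | ⟨⟨h1, h2⟩, h3, h4⟩) | ⟨⟨h1, h2⟩, h3, h4⟩)
      · exact ⟨⟨⟨h1, h2⟩, h3, by linarith⟩, fun h => by linarith [h.2.1]⟩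
      · exact ⟨⟨⟨by linarith, h2⟩, h3, h4⟩, fun h => by linarith [h.1.2]⟩
      · exact ⟨⟨⟨h1, h2⟩, by linarith, h4⟩, fun h => by linarith [h.2.2]⟩
  rw [e]
  refine IsPreconnected.union (m + δ / 2, d + δ / 2) ?_ ?_
    (IsPreconnected.union (m + δ / 2, c - δ / 2) ?_ ?_ (rect_conn _ _ _ _) (rect_conn _ _ _ _))
    (rect_conn _ _ _ _)
  · right
    refine ⟨⟨?_, ?_⟩, ?_, ?_⟩ <;> simp <;> linarith
  · refine ⟨⟨?_, ?_⟩, ?_, ?_⟩ <;> simp <;> linarith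
  · refine ⟨⟨?_, ?_⟩, ?_, ?_⟩ <;> simp <;> linarith
  · refine ⟨⟨?_, ?_⟩, ?_, ?_⟩ <;> simp <;> linarith

lemma rect_simple {R : Set (ℝ × ℝ)} (h : IsRatRect R) : IsSimpleRatPolyomino R := by
  refine ⟨h.poly, ?_, ?_⟩
  · obtain ⟨a, b, c, d, h1, h2, rfl⟩ := h
    rw [interior_prod_eq, interior_Icc, interior_Icc]
    have h1' : (a:ℝ) < b := by exact_mod_cast h1
    have h2' : (c:ℝ) < d := by exact_mod_cast h2
    exact ⟨(nonempty_Ioo.2 h1').prod (nonempty_Ioo.2 h2'), rect_conn _ _ _ _⟩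
  · obtain ⟨a, b, c, d, h1, h2, rfl⟩ := h
    have h1' : (a:ℝ) < b := by exact_mod_cast h1
    have h2' : (c:ℝ) < d := by exact_mod_cast h2
    generalize (a:ℝ) = a at *
    generalize (b:ℝ) = b at *
    generalize (c:ℝ) = c at *
    generalize (d:ℝ) = d at *
    have e : (Icc a b ×ˢ Icc c d : Set (ℝ × ℝ))ᶜ =
      (((Iio a ×ˢ univ) ∪ (univ ×ˢ Iio c)) ∪ (Ioi b ×ˢ univ)) ∪ (univ ×ˢ Ioi d) := by
      ext ⟨x, y⟩
      simp only [mem_compl_iff, mem_prod, mem_Icc, mem_union, mem_Iio, mem_Ioi, mem_univ,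
        and_true, true_and]
      constructor
      · intro h
        by_contra hh
        simp only [not_or, not_lt] at hh
        exact h ⟨⟨hh.1.1.1, hh.1.2⟩, hh.1.1.2, hh.2⟩
      · rintro (((h | h) | h) | h) h' <;> linarith [h'.1.1, h'.1.2, h'.2.1, h'.2.2]
    rw [e]
    refine ⟨⟨(a - 1, c), ?_⟩, ?_⟩
    · left; left; left; simp
    refine IsPreconnected.union (a - 1, d + 1) ?_ ?_
      (IsPreconnected.union (b + 1, c - 1) ?_ ?_ (IsPreconnected.union (a - 1, c - 1) ?_ ?_
      (isPreconnected_Iio.prod isPreconnected_univ) (isPreconnected_univ.prod isPreconnected_Iio))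
        (isPreconnected_Ioi.prod isPreconnected_univ))
      (isPreconnected_univ.prod isPreconnected_Ioi)
    all_goals simp

lemma attach_simple {P : Set (ℝ × ℝ)} (hP : IsSimpleRatPolyomino P) {q m c d : ℚ}
    (hqm : q < m) (hcd : c < d) {δ : ℝ} (hδ : 0 < δ)
    (hdis : Disjoint P (Ioo (q:ℝ) (m + δ) ×ˢ Ioo (c - δ : ℝ) (d + δ)))
    {a c' d' : ℝ} (haq : a < q) (hc' : c' ≤ c) (hd' : d ≤ d')
    (hbase : Icc a (q:ℝ) ×ˢ Icc c' d' ⊆ P) :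
    IsSimpleRatPolyomino (P ∪ Icc (q:ℝ) m ×ˢ Icc (c:ℝ) d) := by
  have hqm' : (q:ℝ) < m := by exact_mod_cast hqm
  have hcd' : (c:ℝ) < d := by exact_mod_cast hcd
  have hR : IsRatRect (Icc (q:ℝ) m ×ˢ Icc (c:ℝ) d) := ⟨q, m, c, d, hqm, hcd, rfl⟩
  refine ⟨hP.1.union_rect hR, ?_, ?_⟩
  · set E : Set (ℝ × ℝ) := Ioo a (m:ℝ) ×ˢ Ioo (c:ℝ) d with hE
    have hEo : IsOpen E := isOpen_Ioo.prod isOpen_Ioo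
    have hES : E ⊆ P ∪ Icc (q:ℝ) m ×ˢ Icc (c:ℝ) d := by
      rintro ⟨x, y⟩ ⟨⟨h1, h2⟩, h3, h4⟩
      simp only at h1 h2 h3 h4
      by_cases hx : x ≤ q
      · left; exact hbase ⟨⟨h1.le, hx⟩, by simp; linarith, by simp; linarith⟩
      · right; exact ⟨⟨(not_le.1 hx).le, h2.le⟩, h3.le, h4.le⟩
    have hsm : (Ioo a (q:ℝ) ×ˢ Ioo (c:ℝ) d : Set (ℝ × ℝ)) ⊆ interior P := by
      apply interior_maximal _ (isOpen_Ioo.prod isOpen_Ioo)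
      rintro ⟨x, y⟩ ⟨⟨h1, h2⟩, h3, h4⟩
      simp only at h1 h2 h3 h4
      exact hbase ⟨⟨h1.le, h2.le⟩, by simp; linarith, by simp; linarith⟩
    have hpt : ((a + q) / 2, ((c:ℝ) + d) / 2) ∈ (Ioo a (q:ℝ) ×ˢ Ioo (c:ℝ) d : Set (ℝ × ℝ)) := by
      refine ⟨⟨?_, ?_⟩, ?_, ?_⟩ <;> simp only <;> linarith
    have hptE : ((a + q) / 2, ((c:ℝ) + d) / 2) ∈ E :=
      ⟨⟨hpt.1.1, hpt.1.2.trans hqm'⟩, hpt.2⟩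
    have hconn : IsPreconnected (interior P ∪ E) :=
      IsPreconnected.union _ (hsm hpt) hptE hP.2.1.isPreconnected (rect_conn _ _ _ _)
    have hsub : interior P ∪ E ⊆ interior (P ∪ Icc (q:ℝ) m ×ˢ Icc (c:ℝ) d) := by
      apply union_subset (interior_mono subset_union_left)
      exact interior_maximal hES hEo
    refine ⟨⟨_, hsub (Or.inl (hsm hpt))⟩, hconn.subset_closure hsub ?_⟩
    refine interior_subset.trans (union_subset ?_ ?_)
    · exact hP.1.reg.trans (closure_mono subset_union_left)
    · refine hR.reg.trans (closure_mono ?_)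
      rw [interior_prod_eq, interior_Icc, interior_Icc]
      refine Subset.trans ?_ subset_union_right
      exact prod_mono (Ioo_subset_Ioo_left haq.le) Subset.rfl
  · have hN : (Ioo (q:ℝ) (m + δ) ×ˢ Ioo (c - δ : ℝ) (d + δ)) ⊆ Pᶜ := by
      intro x hx hxP
      exact disjoint_left.1 hdis hxP hx
    have e : (P ∪ Icc (q:ℝ) m ×ˢ Icc (c:ℝ) d)ᶜ = Pᶜ \ Icc (q:ℝ) m ×ˢ Icc (c:ℝ) d := by
      rw [compl_union, sdiff_eq]
    rw [e]
    refine ⟨⟨(m + δ / 2, c), hN ⟨⟨?_, ?_⟩, ?_, ?_⟩, ?_⟩, ?_⟩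
    · simp only; linarith
    · simp only; linarith
    · simp only; linarith
    · simp only; linarith
    · intro h; have := h.1.2; simp only at this; linarith
    refine compl_attach hP.1.closed.isOpen_compl hP.2.2.isPreconnected hR.closed
      (isOpen_Ioo.prod isOpen_Ioo) ?_ hN (ushape hqm' hcd' hδ)
    rintro ⟨x, y⟩ ⟨⟨⟨h1, h2⟩, h3, h4⟩, h5⟩
    simp only at h1 h2 h3 h4
    refine ⟨⟨?_, ?_⟩, ?_, ?_⟩ <;> simp only
    · rcases h1.lt_or_eq with h | h
      · exact h
      · exfalso; exact h5 (hbase ⟨⟨by simp; linarith, by simp; linarith⟩, by simp; linarith, by simp; linarith⟩)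
    all_goals linarith

def Grow (P P' : Set (ℝ × ℝ)) : Prop :=
  IsSimpleRatPolyomino P' ∧ P ⊆ P' ∧ ∀ t : ℚ, volume P ≤ ENNReal.ofReal t →
    ENNReal.ofReal t ≤ volume P' →
      ∃ C, IsSimpleRatPolyomino C ∧ P ⊆ C ∧ C ⊆ P' ∧ volume C = ENNReal.ofReal t

lemma Grow.refl {P : Set (ℝ × ℝ)} (hP : IsSimpleRatPolyomino P) : Grow P P :=
  ⟨hP, Subset.rfl, fun _ h1 h2 => ⟨P, hP, Subset.rfl, Subset.rfl, le_antisymm h1 h2⟩⟩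

lemma Grow.trans {P Q R : Set (ℝ × ℝ)} (h1 : Grow P Q) (h2 : Grow Q R) : Grow P R := by
  refine ⟨h2.1, h1.2.1.trans h2.2.1, fun t ht1 ht2 => ?_⟩
  rcases le_total (ENNReal.ofReal t) (volume Q) with h | h
  · obtain ⟨C, a, b, c, d⟩ := h1.2.2 t ht1 h
    exact ⟨C, a, b, c.trans h2.2.1, d⟩
  · obtain ⟨C, a, b, c, d⟩ := h2.2.2 t h ht2
    exact ⟨C, a, h1.2.1.trans b, c, d⟩

lemma attach_vol {P : Set (ℝ × ℝ)} {q m c d : ℚ} (hqm : q < m) (hcd : c < d) {δ : ℝ} (hδ : 0 < δ)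
    (hdis : Disjoint P (Ioo (q:ℝ) (m + δ) ×ˢ Ioo (c - δ : ℝ) (d + δ))) {v : ℚ} (hv : 0 ≤ v)
    (hvol : volume P = ENNReal.ofReal v) :
    volume (P ∪ Icc (q:ℝ) m ×ˢ Icc (c:ℝ) d) = ENNReal.ofReal ((v + (m - q) * (d - c) : ℚ) : ℝ) := by
  have hqm' : (q:ℝ) < m := by exact_mod_cast hqm
  have hcd' : (c:ℝ) < d := by exact_mod_cast hcd
  have hv' : (0:ℝ) ≤ v := by exact_mod_cast hv
  rw [measure_union₀ (measurableSet_Icc.prod measurableSet_Icc).nullMeasurableSet]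
  · rw [hvol, Measure.volume_eq_prod, Measure.prod_prod, Real.volume_Icc, Real.volume_Icc,
      ← ENNReal.ofReal_mul (by linarith), ← ENNReal.ofReal_add hv'
        (mul_nonneg (by linarith) (by linarith))]
    push_cast
    rfl
  · have : P ∩ Icc (q:ℝ) m ×ˢ Icc (c:ℝ) d ⊆ ({(q:ℝ)} : Set ℝ) ×ˢ univ := by
      rintro ⟨x, y⟩ ⟨hP, ⟨h1, h2⟩, h3, h4⟩
      simp only at h1 h2 h3 h4
      refine ⟨?_, mem_univ _⟩
      by_contra hne
      have : (q:ℝ) < x := lt_of_le_of_ne h1 (fun h => hne h.symm)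
      refine disjoint_left.1 hdis hP ⟨⟨this, ?_⟩, ?_, ?_⟩ <;> simp only <;> linarith
    refine measure_mono_null this ?_
    rw [Measure.volume_eq_prod, Measure.prod_prod]
    simp

lemma attach_grow {P : Set (ℝ × ℝ)} (hP : IsSimpleRatPolyomino P) {q m c d : ℚ}
    (hqm : q < m) (hcd : c < d) {δ : ℝ} (hδ : 0 < δ)
    (hdis : Disjoint P (Ioo (q:ℝ) (m + δ) ×ˢ Ioo (c - δ : ℝ) (d + δ)))
    {a c' d' : ℝ} (haq : a < q) (hc' : c' ≤ c) (hd' : d ≤ d')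
    (hbase : Icc a (q:ℝ) ×ˢ Icc c' d' ⊆ P) :
    Grow P (P ∪ Icc (q:ℝ) m ×ˢ Icc (c:ℝ) d) := by
  refine ⟨attach_simple hP hqm hcd hδ hdis haq hc' hd' hbase, subset_union_left, ?_⟩
  intro t h1 h2
  obtain ⟨v, hv, hvol⟩ := hP.1.vol
  by_cases htv : t ≤ v
  · refine ⟨P, hP, Subset.rfl, subset_union_left, le_antisymm h1 ?_⟩
    rw [hvol]
    exact ENNReal.ofReal_le_ofReal (by exact_mod_cast htv)
  push Not at htv
  have hdc : 0 < d - c := by linarith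
  rw [attach_vol hqm hcd hδ hdis hv hvol, ENNReal.ofReal_le_ofReal_iff
    (by have : 0 ≤ v + (m - q) * (d - c) := by
          have := mul_pos (sub_pos.2 hqm) hdc
          linarith
        exact_mod_cast this)] at h2
  have h2' : t ≤ v + (m - q) * (d - c) := by exact_mod_cast h2
  set s : ℚ := q + (t - v) / (d - c) with hs
  have hqs : q < s := by
    have : 0 < (t - v) / (d - c) := div_pos (by linarith) hdc
    linarith
  have hsm : s ≤ m := by
    have : (t - v) / (d - c) ≤ m - q := by
      rw [div_le_iff₀ hdc]; linarith
    linarith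
  have hsm' : (s:ℝ) ≤ m := by exact_mod_cast hsm
  have hdis' : Disjoint P (Ioo (q:ℝ) (s + δ) ×ˢ Ioo (c - δ : ℝ) (d + δ)) :=
    hdis.mono_right (prod_mono (Ioo_subset_Ioo_right (by linarith)) Subset.rfl)
  refine ⟨P ∪ Icc (q:ℝ) s ×ˢ Icc (c:ℝ) d,
    attach_simple hP hqs hcd hδ hdis' haq hc' hd' hbase, subset_union_left, ?_, ?_⟩
  · exact union_subset_union_right _ (prod_mono (Icc_subset_Icc_right hsm') Subset.rfl)
  · rw [attach_vol hqs hcd hδ hdis' hv hvol]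
    congr 2
    rw [hs]
    field_simp
    ring

/-- symmetries of the rational grid -/
structure GSym (σ : (ℝ × ℝ) ≃ₜ (ℝ × ℝ)) : Prop where
  inv : ∀ x, σ (σ x) = x
  rect : ∀ R, IsRatRect R → IsRatRect (σ '' R)
  vol : ∀ S : Set (ℝ × ℝ), volume (σ '' S) = volume S

lemma GSym.image_image {σ : (ℝ × ℝ) ≃ₜ (ℝ × ℝ)} (h : GSym σ) (S : Set (ℝ × ℝ)) :
    σ '' (σ '' S) = S := by
  rw [Set.image_image]; simp [h.inv]

lemma GSym.simple {σ : (ℝ × ℝ) ≃ₜ (ℝ × ℝ)} (h : GSym σ) {P : Set (ℝ × ℝ)}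
    (hP : IsSimpleRatPolyomino P) : IsSimpleRatPolyomino (σ '' P) := by
  obtain ⟨⟨n, R, hR, e⟩, h2, h3⟩ := hP
  refine ⟨⟨n, fun i => σ '' R i, fun i => h.rect _ (hR i), by rw [e, image_iUnion]⟩, ?_, ?_⟩
  · rw [← σ.image_interior]
    exact h2.image _ σ.continuous.continuousOn
  · rw [← image_compl_eq σ.bijective]
    exact h3.image _ σ.continuous.continuousOn

lemma GSym.grow {σ : (ℝ × ℝ) ≃ₜ (ℝ × ℝ)} (h : GSym σ) {P P' : Set (ℝ × ℝ)}
    (hP : Grow P P') : Grow (σ '' P) (σ '' P') := by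
  refine ⟨h.simple hP.1, image_mono hP.2.1, fun t h1 h2 => ?_⟩
  rw [h.vol] at h1 h2
  obtain ⟨C, a, b, c, d⟩ := hP.2.2 t h1 h2
  exact ⟨σ '' C, h.simple a, image_mono b, image_mono c, by rw [h.vol, d]⟩

lemma sym_vol {σ : (ℝ × ℝ) ≃ₜ (ℝ × ℝ)} (inv : ∀ x, σ (σ x) = x)
    (h : MeasurePreserving σ volume volume) (S : Set (ℝ × ℝ)) : volume (σ '' S) = volume S := by
  have e : σ '' S = σ ⁻¹' S := by
    ext x
    constructor
    · rintro ⟨y, hy, rfl⟩; simpa [inv] using hy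
    · intro hx; exact ⟨σ x, hx, inv x⟩
  rw [e]
  exact MeasurePreserving.measure_preimage_equiv (f := σ.toMeasurableEquiv) h S

lemma sym_swap : GSym (Homeomorph.prodComm ℝ ℝ) where
  inv x := rfl
  rect R := by
    rintro ⟨a, b, c, d, h1, h2, rfl⟩
    refine ⟨c, d, a, b, h2, h1, ?_⟩
    exact image_swap_prod _ _
  vol := sym_vol (fun x => rfl) Measure.measurePreserving_swap

lemma sym_neg : GSym ((Homeomorph.neg ℝ).prodCongr (Homeomorph.refl ℝ)) where
  inv x := by rcases x with ⟨x, y⟩; simp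
  rect R := by
    rintro ⟨a, b, c, d, h1, h2, rfl⟩
    refine ⟨-b, -a, c, d, by linarith, h2, ?_⟩
    have := prodMap_image_prod (fun x : ℝ => -x) (fun x : ℝ => x) (Icc (a:ℝ) b) (Icc (c:ℝ) d)
    push_cast
    rw [image_neg_Icc, image_id'] at this
    exact this
  vol := sym_vol (fun x => by rcases x with ⟨x, y⟩; simp) ((Measure.measurePreserving_neg volume).prod
    (MeasurePreserving.id volume))

lemma IsRatPolyomino.int_meets {P W : Set (ℝ × ℝ)} (hP : IsRatPolyomino P) (hW : IsOpen W)
    (h : (P ∩ W).Nonempty) : (interior P ∩ W).Nonempty := by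
  obtain ⟨x, hx, hxW⟩ := h
  have := mem_closure_iff.1 (hP.reg hx) W hW hxW
  rwa [inter_comm] at this

lemma box_nhds {W : Set (ℝ × ℝ)} (hW : IsOpen W) {x : ℝ × ℝ} (hx : x ∈ W) :
    ∃ r > 0, Ioo (x.1 - r) (x.1 + r) ×ˢ Ioo (x.2 - r) (x.2 + r) ⊆ W := by
  obtain ⟨r, hr, h⟩ := Metric.isOpen_iff.1 hW x hx
  refine ⟨r, hr, ?_⟩
  rwa [← Real.ball_eq_Ioo, ← Real.ball_eq_Ioo, ball_prod_same]

lemma shoot_right {P : Set (ℝ × ℝ)} (hP : IsSimpleRatPolyomino P) {p : ℝ × ℝ}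
    (hp : p ∈ interior P) {m : ℚ} (hpm : p.1 ≤ m) {ε : ℝ} (hε : 0 < ε) :
    (∃ y ∈ Ioo (p.2 - ε) (p.2 + ε), ((m:ℝ), y) ∈ P) ∨
    ∃ q c d : ℚ, p.1 ≤ q ∧ q < m ∧ p.2 - ε < c ∧ c < d ∧ d < p.2 + ε ∧
      ((q:ℝ), (c:ℝ)) ∈ P ∧ Grow P (P ∪ Icc (q:ℝ) m ×ˢ Icc (c:ℝ) d) := by
  obtain ⟨n, R, hR, e⟩ := hP.1
  choose a b c d hab hcd hRe using hR
  have memP : ∀ x y : ℝ, (x, y) ∈ P ↔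
      ∃ i, ((a i : ℝ) ≤ x ∧ x ≤ b i) ∧ ((c i : ℝ) ≤ y ∧ y ≤ d i) := by
    intro x y
    rw [e, mem_iUnion]
    refine exists_congr fun i => ?_
    rw [hRe i]
    rfl
  obtain ⟨η, hη, hbox⟩ := box_nhds isOpen_interior hp
  set Y : Set ℝ := range (fun i => (c i : ℝ)) ∪ range (fun i => (d i : ℝ)) with hY
  have hYf : Y.Finite := (finite_range _).union (finite_range _)
  have hmin : 0 < min η ε := lt_min hη hε
  have hinf : (Ioo (p.2 - min η ε) (p.2 + min η ε)).Infinite := Ioo_infinite (by linarith)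
  obtain ⟨y0, hy0, hy0Y⟩ := (hinf.sdiff hYf).nonempty
  have hopen : IsOpen (Ioo (p.2 - min η ε) (p.2 + min η ε) \ Y) :=
    isOpen_Ioo.sdiff hYf.isClosed
  obtain ⟨r, hr, hball⟩ := Metric.isOpen_iff.1 hopen y0 ⟨hy0, hy0Y⟩
  rw [Real.ball_eq_Ioo] at hball
  obtain ⟨c0, hc0, hc0'⟩ := exists_rat_btwn (show y0 - r / 2 < y0 by linarith)
  obtain ⟨d0, hd0, hd0'⟩ := exists_rat_btwn (show y0 < y0 + r / 2 by linarith)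
  have hc0J : (c0 : ℝ) ∈ Ioo (y0 - r) (y0 + r) := ⟨by linarith, by linarith⟩
  have hd0J : (d0 : ℝ) ∈ Ioo (y0 - r) (y0 + r) := ⟨by linarith, by linarith⟩
  have hcd0 : (c0 : ℝ) < d0 := by linarith
  have trans : ∀ i y y', y ∈ Ioo (y0 - r) (y0 + r) → y' ∈ Ioo (y0 - r) (y0 + r) →
      ((c i : ℝ) ≤ y ∧ y ≤ d i) → ((c i : ℝ) ≤ y' ∧ y' ≤ d i) := by
    intro i y y' hy hy' h
    constructor
    · by_contra hlt
      push Not at hlt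
      exact (hball (show (c i : ℝ) ∈ Ioo (y0 - r) (y0 + r) from
        ⟨by linarith [hy'.1], by linarith [hy.2, h.1]⟩)).2 (Or.inl ⟨i, rfl⟩)
    · by_contra hlt
      push Not at hlt
      exact (hball (show (d i : ℝ) ∈ Ioo (y0 - r) (y0 + r) from
        ⟨by linarith [hy.1, h.2], by linarith [hy'.2]⟩)).2 (Or.inr ⟨i, rfl⟩)
  have hc0ε := (hball hc0J).1
  have hd0ε := (hball hd0J).1
  have hm1 := min_le_left η ε
  have hm2 := min_le_right η ε
  by_cases hmP : ((m:ℝ), (c0:ℝ)) ∈ P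
  · left
    exact ⟨c0, ⟨by linarith [hc0ε.1], by linarith [hc0ε.2]⟩, hmP⟩
  right
  have hpc : (p.1, (c0:ℝ)) ∈ P := interior_subset (hbox ⟨⟨by simp; linarith, by simp; linarith⟩,
    by simp only; linarith [hc0ε.1], by simp only; linarith [hc0ε.2]⟩)
  obtain ⟨i0, hi0x, hi0y⟩ := (memP _ _).1 hpc
  have hnm : ∀ i, ((c i : ℝ) ≤ c0 ∧ (c0:ℝ) ≤ d i) → (a i : ℝ) ≤ m → (b i : ℝ) < m := by
    intro i hi ha
    by_contra hlt
    push Not at hlt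
    exact hmP ((memP _ _).2 ⟨i, ⟨ha, hlt⟩, hi⟩)
  classical
  obtain ⟨i1, hi1, hmax⟩ := Finset.exists_max_image
    (Finset.univ.filter (fun i => ((c i : ℝ) ≤ c0 ∧ (c0:ℝ) ≤ d i) ∧ (b i : ℝ) ≤ m)) b
    ⟨i0, by
      rw [Finset.mem_filter]
      exact ⟨Finset.mem_univ _, hi0y, (hnm i0 hi0y (hi0x.1.trans hpm)).le⟩⟩
  rw [Finset.mem_filter] at hi1
  obtain ⟨-, hi1y, hi1b⟩ := hi1
  have hab1 : (a i1 : ℝ) < b i1 := by exact_mod_cast hab i1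
  have hq : (b i1 : ℝ) < m := hnm i1 hi1y (hab1.le.trans hi1b)
  have hmax' : ∀ i, ((c i : ℝ) ≤ c0 ∧ (c0:ℝ) ≤ d i) → (b i : ℝ) ≤ m → (b i : ℝ) ≤ b i1 := by
    intro i h1 h2
    have := hmax i (by rw [Finset.mem_filter]; exact ⟨Finset.mem_univ _, h1, h2⟩)
    exact_mod_cast this
  obtain ⟨s, hs, hsbox⟩ := box_nhds hP.1.closed.isOpen_compl
    (x := ((m:ℝ), (c0:ℝ))) hmP
  refine ⟨b i1, c0, d0, hi0x.2.trans (hmax' i0 hi0y (hnm i0 hi0y (hi0x.1.trans hpm)).le),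
    by exact_mod_cast hq, by linarith [hc0ε.1], by exact_mod_cast hcd0, by linarith [hd0ε.2],
    (memP _ _).2 ⟨i1, ⟨hab1.le, le_rfl⟩, hi1y⟩, ?_⟩
  refine attach_grow hP (by exact_mod_cast hq) (by exact_mod_cast hcd0)
    (δ := min s (r / 2)) (lt_min hs (by linarith)) ?_ hab1 hi1y.1
    (trans i1 c0 d0 hc0J hd0J hi1y).2 ?_
  · rw [disjoint_left]
    rintro ⟨x, y⟩ hxy ⟨⟨h1, h2⟩, h3, h4⟩
    simp only at h1 h2 h3 h4
    have hl1 := min_le_left s (r / 2)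
    have hl2 := min_le_right s (r / 2)
    obtain ⟨i, hix, hiy⟩ := (memP _ _).1 hxy
    have hiy' := trans i y c0 ⟨by linarith, by linarith⟩ hc0J hiy
    by_cases hbm : (b i : ℝ) ≤ m
    · linarith [hmax' i hiy' hbm, hix.2]
    · push Not at hbm
      have ham : (m:ℝ) < a i := by
        by_contra hlt
        push Not at hlt
        linarith [hnm i hiy' hlt]
      have hxP : (x, (c0:ℝ)) ∈ P := (memP _ _).2 ⟨i, hix, hiy'⟩
      refine hsbox (a := (x, (c0:ℝ))) ⟨⟨?_, ?_⟩, ?_, ?_⟩ hxP <;> simp only <;> linarith [hix.1]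
  · rintro ⟨x, y⟩ ⟨⟨h1, h2⟩, h3, h4⟩
    exact (memP _ _).2 ⟨i1, ⟨h1, h2⟩, h3, h4⟩

lemma move_right {P : Set (ℝ × ℝ)} (hP : IsSimpleRatPolyomino P) {p : ℝ × ℝ}
    (hp : p ∈ interior P) {m : ℚ} (hpm : p.1 ≤ m) {a b c d : ℝ} (hpI : p.1 ∈ Ioo a b)
    (hpJ : p.2 ∈ Ioo c d) (hm : (m:ℝ) ∈ Ioo a b) :
    ∃ P', Grow P P' ∧ P' ⊆ P ∪ Ioo a b ×ˢ Ioo c d ∧ ∃ y ∈ Ioo c d, ((m:ℝ), y) ∈ P' := by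
  have hε : 0 < min (p.2 - c) (d - p.2) := lt_min (by linarith [hpJ.1]) (by linarith [hpJ.2])
  have h1 := min_le_left (p.2 - c) (d - p.2)
  have h2 := min_le_right (p.2 - c) (d - p.2)
  rcases shoot_right hP hp hpm hε with ⟨y, hy, hyP⟩ | ⟨q, c', d', hq, hqm, hc, hcd, hd, -, hg⟩
  · exact ⟨P, Grow.refl hP, subset_union_left, y, ⟨by linarith [hy.1], by linarith [hy.2]⟩, hyP⟩
  · have hcd' : (c':ℝ) < d' := by exact_mod_cast hcd
    have hqm' : (q:ℝ) < m := by exact_mod_cast hqm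
    refine ⟨_, hg, union_subset_union_right _ (prod_mono ?_ ?_), c', ⟨?_, ?_⟩, Or.inr ⟨⟨?_, ?_⟩, ?_, ?_⟩⟩
    · intro x hx; exact ⟨by linarith [hx.1, hpI.1], by linarith [hx.2, hm.2]⟩
    · intro x hx; exact ⟨by linarith [hx.1], by linarith [hx.2]⟩
    all_goals (try simp only)
    all_goals linarith

lemma move_left {P : Set (ℝ × ℝ)} (hP : IsSimpleRatPolyomino P) {p : ℝ × ℝ}
    (hp : p ∈ interior P) {m : ℚ} (hpm : (m:ℝ) ≤ p.1) {a b c d : ℝ} (hpI : p.1 ∈ Ioo a b)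
    (hpJ : p.2 ∈ Ioo c d) (hm : (m:ℝ) ∈ Ioo a b) :
    ∃ P', Grow P P' ∧ P' ⊆ P ∪ Ioo a b ×ˢ Ioo c d ∧ ∃ y ∈ Ioo c d, ((m:ℝ), y) ∈ P' := by
  set σ := (Homeomorph.neg ℝ).prodCongr (Homeomorph.refl ℝ) with hσ
  have hs : GSym σ := sym_neg
  obtain ⟨P', h1, h2, y, hy, h3⟩ := move_right (P := σ '' P) (p := σ p) (m := -m) (a := -b)
    (b := -a) (c := c) (d := d) (hs.simple hP)
    (by rw [← σ.image_interior]; exact mem_image_of_mem _ hp)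
    (by simp [hσ]; exact hpm) (by simp [hσ]; exact hpI.symm) (by simpa [hσ] using hpJ)
    (by simp; exact hm.symm)
  refine ⟨σ '' P', ?_, ?_, y, hy, ⟨_, h3, by simp [hσ]⟩⟩
  · have := hs.grow h1
    rwa [hs.image_image] at this
  · refine (image_mono h2).trans ?_
    rw [image_union, hs.image_image]
    refine union_subset_union_right _ ?_
    rintro _ ⟨⟨x, y⟩, ⟨⟨h1, h2⟩, h3⟩, rfl⟩
    refine ⟨⟨?_, ?_⟩, ?_⟩
    · simp [hσ]; linarith
    · simp [hσ]; linarith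
    · simpa [hσ] using h3

lemma move_h {P : Set (ℝ × ℝ)} (hP : IsSimpleRatPolyomino P) {a b c d a' b' : ℝ}
    (hne : (P ∩ Ioo a b ×ˢ Ioo c d).Nonempty) (h1 : a ≤ a') (h2 : a' < b') (h3 : b' ≤ b) :
    ∃ P', Grow P P' ∧ P' ⊆ P ∪ Ioo a b ×ˢ Ioo c d ∧ (P' ∩ Ioo a' b' ×ˢ Ioo c d).Nonempty := by
  obtain ⟨p, hp, hpI, hpJ⟩ := hP.1.int_meets (isOpen_Ioo.prod isOpen_Ioo) hne
  obtain ⟨m, hm1, hm2⟩ := exists_rat_btwn h2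
  have hm : (m:ℝ) ∈ Ioo a b := ⟨by linarith, by linarith⟩
  rcases le_total p.1 m with h | h
  · obtain ⟨P', h1, h2, y, hy, h3⟩ := move_right hP hp h hpI hpJ hm
    exact ⟨P', h1, h2, _, h3, ⟨hm1, hm2⟩, hy⟩
  · obtain ⟨P', h1, h2, y, hy, h3⟩ := move_left hP hp h hpI hpJ hm
    exact ⟨P', h1, h2, _, h3, ⟨hm1, hm2⟩, hy⟩

lemma swap_image (s t : Set ℝ) : (Homeomorph.prodComm ℝ ℝ) '' (s ×ˢ t) = t ×ˢ s :=
  image_swap_prod _ _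

lemma move_v {P : Set (ℝ × ℝ)} (hP : IsSimpleRatPolyomino P) {a b c d c' d' : ℝ}
    (hne : (P ∩ Ioo a b ×ˢ Ioo c d).Nonempty) (h1 : c ≤ c') (h2 : c' < d') (h3 : d' ≤ d) :
    ∃ P', Grow P P' ∧ P' ⊆ P ∪ Ioo a b ×ˢ Ioo c d ∧ (P' ∩ Ioo a b ×ˢ Ioo c' d').Nonempty := by
  have hs := sym_swap
  obtain ⟨P', g1, g2, g3⟩ := move_h (P := (Homeomorph.prodComm ℝ ℝ) '' P) (a := c) (b := d)
    (c := a) (d := b) (hs.simple hP) (by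
      rw [← swap_image, ← image_inter (Homeomorph.injective _)]
      exact hne.image _) h1 h2 h3
  refine ⟨(Homeomorph.prodComm ℝ ℝ) '' P', ?_, ?_, ?_⟩
  · have := hs.grow g1
    rwa [hs.image_image] at this
  · refine (image_mono g2).trans ?_
    rw [image_union, hs.image_image, swap_image]
  · rw [← swap_image, ← image_inter (Homeomorph.injective _)]
    exact g3.image _

lemma dense_reach {U P W : Set (ℝ × ℝ)} (hU : IsOpen U) (cU : IsPreconnected U)
    (hP : IsSimpleRatPolyomino P) (hPU : P ⊆ U) (hW : IsOpen W) (hWU : W ⊆ U)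
    (hWne : W.Nonempty) : ∃ P', Grow P P' ∧ P' ⊆ U ∧ (P' ∩ W).Nonempty := by
  set Z : Set (ℝ × ℝ) := ⋃ P' ∈ {P' | Grow P P' ∧ P' ⊆ U}, P' with hZ
  have key : closure Z ∩ U ⊆ interior (closure Z) := by
    rintro x ⟨hx, hxU⟩
    obtain ⟨r, hr, hbox⟩ := box_nhds hU hxU
    have hbo : IsOpen (Ioo (x.1 - r) (x.1 + r) ×ˢ Ioo (x.2 - r) (x.2 + r)) :=
      isOpen_Ioo.prod isOpen_Ioo
    have hxb : x ∈ Ioo (x.1 - r) (x.1 + r) ×ˢ Ioo (x.2 - r) (x.2 + r) :=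
      ⟨⟨by linarith, by linarith⟩, by linarith, by linarith⟩
    rw [mem_interior]
    refine ⟨_, ?_, hbo, hxb⟩
    obtain ⟨p, hpb, hpZ⟩ := mem_closure_iff.1 hx _ hbo hxb
    rw [hZ, mem_iUnion₂] at hpZ
    obtain ⟨P1, ⟨hg1, hU1⟩, hpP1⟩ := hpZ
    intro z hz
    rw [mem_closure_iff]
    intro o ho hzo
    obtain ⟨s, hs, hsb⟩ := box_nhds (ho.inter hbo) ⟨hzo, hz⟩
    have hs1 : max (z.1 - s) (x.1 - r) < min (z.1 + s) (x.1 + r) := by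
      rw [max_lt_iff, lt_min_iff, lt_min_iff]
      refine ⟨⟨?_, ?_⟩, ?_, ?_⟩ <;> linarith [hz.1.1, hz.1.2]
    have hs2 : max (z.2 - s) (x.2 - r) < min (z.2 + s) (x.2 + r) := by
      rw [max_lt_iff, lt_min_iff, lt_min_iff]
      refine ⟨⟨?_, ?_⟩, ?_, ?_⟩ <;> linarith [hz.2.1, hz.2.2]
    obtain ⟨P2, hg2, hU2, hne2⟩ := move_h hg1.1 ⟨p, hpP1, hpb⟩ (le_max_right _ _) hs1
      (min_le_right _ _)
    obtain ⟨P3, hg3, hU3, hne3⟩ := move_v hg2.1 hne2 (le_max_right _ _) hs2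
      (min_le_right _ _)
    obtain ⟨w, hw, hwb⟩ := hne3
    refine ⟨w, (hsb ⟨⟨?_, ?_⟩, ?_, ?_⟩).1, ?_⟩
    · exact (le_max_left _ _).trans_lt hwb.1.1
    · exact hwb.1.2.trans_le (min_le_left _ _)
    · exact (le_max_left _ _).trans_lt hwb.2.1
    · exact hwb.2.2.trans_le (min_le_left _ _)
    · rw [hZ, mem_iUnion₂]
      have hU2' : P2 ⊆ U := hU2.trans (union_subset hU1 hbox)
      refine ⟨P3, ⟨(hg1.trans hg2).trans hg3, hU3.trans (union_subset hU2' (Subset.trans ?_ hbox))⟩, hw⟩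
      exact prod_mono (Ioo_subset_Ioo (le_max_right _ _) (min_le_right _ _)) Subset.rfl
  have hPZ : P ⊆ Z := by
    intro y hy
    rw [hZ, mem_iUnion₂]
    exact ⟨P, ⟨Grow.refl hP, hPU⟩, hy⟩
  obtain ⟨p, hp⟩ := hP.2.1.nonempty
  have hpP := interior_subset hp
  have hall : U ⊆ interior (closure Z) := by
    refine cU.subset_of_closure_inter_subset isOpen_interior ⟨p, hPU hpP, ?_⟩ ?_
    · exact key ⟨subset_closure (hPZ hpP), hPU hpP⟩
    · refine Subset.trans (inter_subset_inter_left _ ?_) key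
      exact closure_minimal interior_subset isClosed_closure
  obtain ⟨w, hw⟩ := hWne
  obtain ⟨y, hyW, hyZ⟩ := mem_closure_iff.1 (interior_subset (hall (hWU hw))) W hW hw
  rw [hZ, mem_iUnion₂] at hyZ
  obtain ⟨P', ⟨h1, h2⟩, h3⟩ := hyZ
  exact ⟨P', h1, h2, y, h3, hyW⟩

lemma sym_vneg : GSym ((Homeomorph.refl ℝ).prodCongr (Homeomorph.neg ℝ)) where
  inv x := by rcases x with ⟨x, y⟩; simp
  rect R := by
    rintro ⟨a, b, c, d, h1, h2, rfl⟩
    refine ⟨a, b, -d, -c, h1, by linarith, ?_⟩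
    have := prodMap_image_prod (fun x : ℝ => x) (fun x : ℝ => -x) (Icc (a:ℝ) b) (Icc (c:ℝ) d)
    push_cast
    rw [image_neg_Icc, image_id'] at this
    exact this
  vol := sym_vol (fun x => by rcases x with ⟨x, y⟩; simp) ((MeasurePreserving.id volume).prod
    (Measure.measurePreserving_neg volume))

lemma vneg_image (s t : Set ℝ) : ((Homeomorph.refl ℝ).prodCongr (Homeomorph.neg ℝ)) '' (s ×ˢ t) =
    s ×ˢ ((fun x => -x) '' t) := by
  have := prodMap_image_prod (fun x : ℝ => x) (fun x : ℝ => -x) s t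
  rw [image_id'] at this
  exact this

lemma attach_up {P : Set (ℝ × ℝ)} (hP : IsSimpleRatPolyomino P) {l m j d : ℚ}
    (hlm : l < m) (hjd : j < d) {δ : ℝ} (hδ : 0 < δ)
    (hdis : Disjoint P (Ioo (l - δ : ℝ) (m + δ) ×ˢ Ioo (j : ℝ) (d + δ)))
    {a : ℝ} (haj : a < j) (hbase : Icc (l:ℝ) m ×ˢ Icc a j ⊆ P) :
    Grow P (P ∪ Icc (l:ℝ) m ×ˢ Icc (j:ℝ) d) := by
  have hs := sym_swap
  have := attach_grow (hs.simple hP) hjd hlm hδ (by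
    rw [← swap_image, disjoint_image_iff (Homeomorph.injective _)]
    exact hdis) haj le_rfl le_rfl (by
      rw [← swap_image]
      exact image_mono hbase)
  have := hs.grow this
  rwa [image_union, hs.image_image, swap_image] at this

lemma attach_down {P : Set (ℝ × ℝ)} (hP : IsSimpleRatPolyomino P) {l m j c : ℚ}
    (hlm : l < m) (hjd : c < j) {δ : ℝ} (hδ : 0 < δ)
    (hdis : Disjoint P (Ioo (l - δ : ℝ) (m + δ) ×ˢ Ioo (c - δ : ℝ) j))
    {a : ℝ} (haj : j < a) (hbase : Icc (l:ℝ) m ×ˢ Icc (j:ℝ) a ⊆ P) :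
    Grow P (P ∪ Icc (l:ℝ) m ×ˢ Icc (c:ℝ) j) := by
  have hs := sym_vneg
  have := attach_up (j := -j) (d := -c) (a := -a) (hs.simple hP) hlm (by linarith) hδ (by
    have e : Ioo (((-j : ℚ)) : ℝ) (((-c : ℚ)) + δ : ℝ) = (fun x => -x) '' (Ioo (c - δ : ℝ) j) := by
      rw [image_neg_Ioo]; push_cast; congr 1; ring
    rw [e, ← vneg_image, disjoint_image_iff (Homeomorph.injective _)]
    exact hdis) (by push_cast; linarith) (by
      have e : Icc (-a : ℝ) ((-j : ℚ) : ℝ) = (fun x => -x) '' (Icc (j : ℝ) a) := by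
        rw [image_neg_Icc]; push_cast; rfl
      rw [e, ← vneg_image]
      exact image_mono hbase)
  have := hs.grow this
  rw [image_union, hs.image_image, vneg_image, image_neg_Icc] at this
  push_cast at this
  rwa [neg_neg, neg_neg] at this

lemma Icc_thick {u : Set ℝ} (hu : IsOpen u) {l m : ℝ} (hlm : l ≤ m) (h : Icc l m ⊆ u) :
    ∃ r > 0, Ioo (l - r) (m + r) ⊆ u := by
  obtain ⟨r1, hr1, h1⟩ := Metric.isOpen_iff.1 hu l (h ⟨le_rfl, hlm⟩)
  obtain ⟨r2, hr2, h2⟩ := Metric.isOpen_iff.1 hu m (h ⟨hlm, le_rfl⟩)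
  rw [Real.ball_eq_Ioo] at h1 h2
  have m1 := min_le_left r1 r2
  have m2 := min_le_right r1 r2
  refine ⟨min r1 r2, lt_min hr1 hr2, fun x hx => ?_⟩
  by_cases hx1 : x < l
  · exact h1 ⟨by linarith [hx.1], by linarith⟩
  · by_cases hx2 : m < x
    · exact h2 ⟨by linarith, by linarith [hx.2]⟩
    · exact h ⟨not_lt.1 hx1, not_lt.1 hx2⟩

lemma rect_thick {U : Set (ℝ × ℝ)} (hU : IsOpen U) {l m c d : ℝ} (hlm : l ≤ m) (hcd : c ≤ d)
    (h : Icc l m ×ˢ Icc c d ⊆ U) :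
    ∃ r > 0, Ioo (l - r) (m + r) ×ˢ Ioo (c - r) (d + r) ⊆ U := by
  obtain ⟨u, v, hu, hv, h1, h2, h3⟩ := generalized_tube_lemma (isCompact_Icc (a := l) (b := m))
    (isCompact_Icc (a := c) (b := d)) hU h
  obtain ⟨r1, hr1, g1⟩ := Icc_thick hu hlm h1
  obtain ⟨r2, hr2, g2⟩ := Icc_thick hv hcd h2
  have m1 := min_le_left r1 r2
  have m2 := min_le_right r1 r2
  refine ⟨min r1 r2, lt_min hr1 hr2, Subset.trans (prod_mono ?_ ?_) h3⟩
  · exact (Ioo_subset_Ioo (by linarith) (by linarith)).trans g1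
  · exact (Ioo_subset_Ioo (by linarith) (by linarith)).trans g2

lemma conn_sdiff_one {U D : Set (ℝ × ℝ)} (hU : IsOpen U) (cU : IsPreconnected U)
    (hD : IsClosed D) (cD : IsPreconnected Dᶜ) (hDU : D ⊆ U) : IsPreconnected (U \ D) := by
  rw [sdiff_eq]
  refine unico hU hD.isOpen_compl cU cD ?_
  rw [eq_univ_iff_forall]
  intro x
  by_cases hx : x ∈ D
  · exact Or.inl (hDU hx)
  · exact Or.inr hx

lemma conn_sdiff {ι : Type*} {U : Set (ℝ × ℝ)} (hU : IsOpen U) (cU : IsPreconnected U)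
    (D : ι → Set (ℝ × ℝ)) (S : Finset ι) (hD : ∀ i ∈ S, IsClosed (D i))
    (cD : ∀ i ∈ S, IsPreconnected (D i)ᶜ) (hDU : ∀ i ∈ S, D i ⊆ U)
    (hdis : (S : Set ι).PairwiseDisjoint D) :
    IsOpen (U \ ⋃ i ∈ S, D i) ∧ IsPreconnected (U \ ⋃ i ∈ S, D i) := by
  classical
  induction S using Finset.induction_on with
  | empty => simpa using ⟨hU, cU⟩
  | insert a S ha ih =>
    obtain ⟨o, c⟩ := ih (fun i hi => hD i (Finset.mem_insert_of_mem hi))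
      (fun i hi => cD i (Finset.mem_insert_of_mem hi))
      (fun i hi => hDU i (Finset.mem_insert_of_mem hi))
      (hdis.subset (by simp))
    have e : (U \ ⋃ i ∈ insert a S, D i) = (U \ ⋃ i ∈ S, D i) \ D a := by
      rw [Finset.set_biUnion_insert, union_comm, sdiff_sdiff]
    rw [e]
    have haS := Finset.mem_insert_self a S
    refine ⟨o.sdiff (hD a haS), conn_sdiff_one o c (hD a haS) (cD a haS) ?_⟩
    intro x hx
    refine ⟨hDU a haS hx, ?_⟩
    rw [mem_iUnion₂]
    rintro ⟨i, hi, hxi⟩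
    have hne : a ≠ i := by rintro rfl; exact ha hi
    exact disjoint_left.1 (hdis (by simp) (by simp [hi]) hne) hx hxi

lemma merge {U P Q : Set (ℝ × ℝ)} (hU : IsOpen U) (cU : IsPreconnected U)
    (hP : IsSimpleRatPolyomino P) (hPU : P ⊆ U) (hQ : IsRatRect Q) (hQU : Q ⊆ U)
    (hPQ : Disjoint P Q) : ∃ P', Grow P P' ∧ P' ⊆ U ∧ Q ⊆ P' := by
  have hUQ : IsOpen (U \ Q) := hU.sdiff hQ.closed
  have cUQ : IsPreconnected (U \ Q) :=
    conn_sdiff_one hU cU hQ.closed (rect_simple hQ).2.2.isPreconnected hQU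
  obtain ⟨l, m, c, d, hlm, hcd, rfl⟩ := hQ
  have hlm' : (l:ℝ) < m := by exact_mod_cast hlm
  have hcd' : (c:ℝ) < d := by exact_mod_cast hcd
  obtain ⟨δ0, hδ0, hbox0⟩ := rect_thick hU hlm'.le hcd'.le hQU
  have hWo : IsOpen (Ioo (l - δ0) (l:ℝ) ×ˢ Ioo (c:ℝ) d) := isOpen_Ioo.prod isOpen_Ioo
  obtain ⟨P1, hg1, hP1, hne1⟩ := dense_reach hUQ cUQ hP
    (fun x hx => ⟨hPU hx, disjoint_left.1 hPQ hx⟩) hWo (by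
      rintro ⟨x, y⟩ ⟨⟨h1, h2⟩, h3, h4⟩
      simp only at h1 h2 h3 h4
      refine ⟨hbox0 ⟨⟨?_, ?_⟩, ?_, ?_⟩, ?_⟩
      · exact h1
      · simp only; linarith
      · simp only; linarith
      · simp only; linarith
      · intro h; have := h.1.1; simp only at this; linarith)
    ((nonempty_Ioo.2 (by linarith)).prod (nonempty_Ioo.2 hcd'))
  obtain ⟨p, hp, ⟨hp1, hp2⟩, hp3, hp4⟩ := hg1.1.1.int_meets hWo hne1
  have hε : 0 < min (p.2 - c) (d - p.2) := lt_min (by linarith) (by linarith)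
  have m1 := min_le_left (p.2 - c) (d - p.2)
  have m2 := min_le_right (p.2 - c) (d - p.2)
  rcases shoot_right hg1.1 hp (m := m) (by linarith) hε with
    ⟨y, hy, hyP⟩ | ⟨q, c', d', hq, hqm, hc, hcd1, hd, hqP, hg2⟩
  · exfalso
    exact (hP1 hyP).2 ⟨⟨hlm'.le, le_rfl⟩, by simp only; linarith [hy.1], by simp only; linarith [hy.2]⟩
  have hqm' : (q:ℝ) < m := by exact_mod_cast hqm
  have hcd1' : (c':ℝ) < d' := by exact_mod_cast hcd1
  have hcc : (c:ℝ) < c' := by linarith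
  have hdd : (d':ℝ) < d := by linarith
  have hql : (q:ℝ) < l := by
    by_contra hlt
    push Not at hlt
    exact (hP1 hqP).2 ⟨⟨hlt, hqm'.le⟩, hcc.le, by simp only; linarith⟩
  obtain ⟨δ, hδ, hboxδ⟩ := rect_thick hg1.1.1.closed.isOpen_compl hlm'.le hcd'.le
    (fun x hx hxP => (hP1 hxP).2 hx)
  set P2 := P1 ∪ Icc (q:ℝ) m ×ˢ Icc (c':ℝ) d' with hP2
  have hg3 : Grow P2 (P2 ∪ Icc (l:ℝ) m ×ˢ Icc (d':ℝ) d) := by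
    refine attach_up hg2.1 hlm (by exact_mod_cast hdd) hδ ?_ hcd1' ?_
    · rw [disjoint_left]
      rintro ⟨x, y⟩ hxy ⟨⟨h1, h2⟩, h3, h4⟩
      simp only at h1 h2 h3 h4
      rcases hxy with h | h
      · refine hboxδ (a := (x, y)) ⟨⟨h1, h2⟩, ?_, h4⟩ h
        simp only; linarith
      · have := h.2.2; simp only at this; linarith
    · rintro ⟨x, y⟩ ⟨⟨h1, h2⟩, h3⟩
      right
      exact ⟨⟨hql.le.trans h1, h2⟩, h3⟩
  set P3 := P2 ∪ Icc (l:ℝ) m ×ˢ Icc (d':ℝ) d with hP3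
  have hg4 : Grow P3 (P3 ∪ Icc (l:ℝ) m ×ˢ Icc (c:ℝ) c') := by
    refine attach_down hg3.1 hlm (by exact_mod_cast hcc) hδ ?_ hcd1' ?_
    · rw [disjoint_left]
      rintro ⟨x, y⟩ hxy ⟨⟨h1, h2⟩, h3, h4⟩
      simp only at h1 h2 h3 h4
      rcases hxy with (h | h) | h
      · refine hboxδ (a := (x, y)) ⟨⟨h1, h2⟩, h3, ?_⟩ h
        simp only; linarith
      · have := h.2.1; simp only at this; linarith
      · have := h.2.1; simp only at this; linarith
    · rintro ⟨x, y⟩ ⟨⟨h1, h2⟩, h3⟩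
      left; right
      exact ⟨⟨hql.le.trans h1, h2⟩, h3⟩
  refine ⟨_, ((hg1.trans hg2).trans hg3).trans hg4, ?_, ?_⟩
  · rintro ⟨x, y⟩ (((h | ⟨⟨h1, h2⟩, h3, h4⟩) | ⟨⟨h1, h2⟩, h3, h4⟩) | ⟨⟨h1, h2⟩, h3, h4⟩)
    · exact (hP1 h).1
    · simp only at h1 h2 h3 h4
      refine hbox0 ⟨⟨?_, ?_⟩, ?_, ?_⟩ <;> simp only <;> linarith
    · simp only at h1 h2 h3 h4
      refine hbox0 ⟨⟨?_, ?_⟩, ?_, ?_⟩ <;> simp only <;> linarith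
    · simp only at h1 h2 h3 h4
      refine hbox0 ⟨⟨?_, ?_⟩, ?_, ?_⟩ <;> simp only <;> linarith
  · rintro ⟨x, y⟩ ⟨⟨h1, h2⟩, h3, h4⟩
    simp only at h1 h2 h3 h4
    by_cases hy : y ≤ c'
    · right; exact ⟨⟨h1, h2⟩, h3, hy⟩
    · by_cases hy' : (d':ℝ) ≤ y
      · left; right; exact ⟨⟨h1, h2⟩, hy', h4⟩
      · left; left; right
        exact ⟨⟨hql.le.trans h1, h2⟩, (not_le.1 hy).le, (not_le.1 hy').le⟩

lemma merge_list {ι : Type*} {U : Set (ℝ × ℝ)} (hU : IsOpen U) (cU : IsPreconnected U)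
    (Q : ι → Set (ℝ × ℝ)) (S : Finset ι) : ∀ (P : Set (ℝ × ℝ)),
    IsSimpleRatPolyomino P → P ⊆ U → (∀ i ∈ S, IsRatRect (Q i)) → (∀ i ∈ S, Q i ⊆ U) →
    (∀ i ∈ S, Disjoint P (Q i)) → (S : Set ι).PairwiseDisjoint Q →
    ∃ P', Grow P P' ∧ P' ⊆ U ∧ ∀ i ∈ S, Q i ⊆ P' := by
  classical
  induction S using Finset.induction_on with
  | empty => intro P hP hPU _ _ _ _; exact ⟨P, Grow.refl hP, hPU, by simp⟩
  | insert a S ha ih =>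
    intro P hP hPU hQ hQU hdis hpw
    have haS := Finset.mem_insert_self a S
    have hS : ∀ i ∈ S, i ∈ insert a S := fun i hi => Finset.mem_insert_of_mem hi
    have hpw' : (S : Set ι).PairwiseDisjoint Q := hpw.subset (by simp)
    obtain ⟨o, cc⟩ := conn_sdiff hU cU Q S (fun i hi => (hQ i (hS i hi)).closed)
      (fun i hi => (rect_simple (hQ i (hS i hi))).2.2.isPreconnected)
      (fun i hi => hQU i (hS i hi)) hpw'
    obtain ⟨P1, g1, s1, q1⟩ := merge (Q := Q a) o cc hP (by
        intro x hx
        refine ⟨hPU hx, ?_⟩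
        rw [mem_iUnion₂]
        rintro ⟨i, hi, hxi⟩
        exact disjoint_left.1 (hdis i (hS i hi)) hx hxi) (hQ a haS) (by
        intro x hx
        refine ⟨hQU a haS hx, ?_⟩
        rw [mem_iUnion₂]
        rintro ⟨i, hi, hxi⟩
        have hne : a ≠ i := by rintro rfl; exact ha hi
        exact disjoint_left.1 (hpw (by simp) (by simp [hi]) hne) hx hxi) (hdis a haS)
    obtain ⟨P2, g2, s2, q2⟩ := ih P1 g1.1 (fun x hx => (s1 hx).1) (fun i hi => hQ i (hS i hi))
      (fun i hi => hQU i (hS i hi)) (by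
        intro i hi
        rw [disjoint_left]
        intro x hx hxi
        exact (s1 hx).2 (mem_iUnion₂.2 ⟨i, hi, hxi⟩)) hpw'
    refine ⟨P2, g1.trans g2, s2, ?_⟩
    intro i hi
    rcases Finset.mem_insert.1 hi with rfl | hi
    · exact q1.trans g2.2.1
    · exact q2 i hi

lemma small_rect (x : ℝ × ℝ) {r : ℝ} (hr : 0 < r) : ∃ a b c d : ℚ, a < b ∧ c < d ∧
    x.1 - r < a ∧ (a:ℝ) < x.1 - r / 2 ∧ x.1 + r / 2 < b ∧ (b:ℝ) < x.1 + r ∧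
    x.2 - r < c ∧ (c:ℝ) < x.2 - r / 2 ∧ x.2 + r / 2 < d ∧ (d:ℝ) < x.2 + r := by
  obtain ⟨a, ha, ha'⟩ := exists_rat_btwn (show x.1 - r < x.1 - r / 2 by linarith)
  obtain ⟨b, hb, hb'⟩ := exists_rat_btwn (show x.1 + r / 2 < x.1 + r by linarith)
  obtain ⟨c, hc, hc'⟩ := exists_rat_btwn (show x.2 - r < x.2 - r / 2 by linarith)
  obtain ⟨d, hd, hd'⟩ := exists_rat_btwn (show x.2 + r / 2 < x.2 + r by linarith)
  have h1 : (a:ℝ) < b := by linarith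
  have h2 : (c:ℝ) < d := by linarith
  exact ⟨a, b, c, d, by exact_mod_cast h1, by exact_mod_cast h2, ha, ha', hb, hb', hc, hc', hd, hd'⟩

lemma rect_vol {a b c d : ℝ} (h : a ≤ b) :
    volume (Icc a b ×ˢ Icc c d : Set (ℝ × ℝ)) = ENNReal.ofReal ((b - a) * (d - c)) := by
  rw [Measure.volume_eq_prod, Measure.prod_prod, Real.volume_Icc, Real.volume_Icc,
      ← ENNReal.ofReal_mul (by linarith)]

lemma vitali_fill {O : Set (ℝ × ℝ)} (hO : IsOpen O) {t : ENNReal} (ht : t < volume O) :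
    ∃ (ι : Type) (S : Finset ι) (Q : ι → Set (ℝ × ℝ)), (∀ i ∈ S, IsRatRect (Q i)) ∧
      (∀ i ∈ S, Q i ⊆ O) ∧ (S : Set ι).PairwiseDisjoint Q ∧ t < ∑ i ∈ S, volume (Q i) := by
  set T : Set ((ℝ × ℝ) × ℝ × Set (ℝ × ℝ)) := {a | IsRatRect a.2.2 ∧ a.2.2 ⊆ O ∧
    a.2.2 ⊆ Metric.closedBall a.1 a.2.1 ∧
    volume (Metric.closedBall a.1 (3 * a.2.1)) ≤ (36 : NNReal) * volume a.2.2} with hT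
  obtain ⟨u, huT, hcount, hpw, hnull⟩ := Vitali.exists_disjoint_covering_ae volume O T 36
    (fun a => a.2.1) (fun a => a.1) (fun a => a.2.2) (fun a ha => ha.2.2.1)
    (fun a ha => ha.2.2.2) (by
      intro a ha
      exact (rect_simple ha.1).2.1.nonempty) (fun a ha => ha.1.closed) (by
      intro x hx ε hε
      obtain ⟨r0, hr0, hbox⟩ := box_nhds hO hx
      have hr : 0 < min ε r0 := lt_min hε hr0
      obtain ⟨a, b, c, d, hab, hcd, h1, h2, h3, h4, h5, h6, h7, h8⟩ := small_rect x hr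
      have m1 := min_le_left ε r0
      have m2 := min_le_right ε r0
      refine ⟨(x, min ε r0, Icc (a:ℝ) b ×ˢ Icc (c:ℝ) d), ⟨⟨a, b, c, d, hab, hcd, rfl⟩, ?_, ?_, ?_⟩,
        m1, rfl⟩
      · refine Subset.trans (prod_mono ?_ ?_) hbox
        · intro y hy; exact ⟨by linarith [hy.1], by linarith [hy.2]⟩
        · intro y hy; exact ⟨by linarith [hy.1], by linarith [hy.2]⟩
      · simp only
        rw [← closedBall_prod_same, Real.closedBall_eq_Icc, Real.closedBall_eq_Icc]
        exact prod_mono (Icc_subset_Icc h1.le h4.le) (Icc_subset_Icc h5.le h8.le)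
      · simp only
        rw [← closedBall_prod_same, Real.closedBall_eq_Icc, Real.closedBall_eq_Icc,
          rect_vol (by linarith), rect_vol (by exact_mod_cast hab.le)]
        have : ((36 : NNReal) : ENNReal) = ENNReal.ofReal 36 := by
          simp
        rw [this, ← ENNReal.ofReal_mul (by norm_num)]
        apply ENNReal.ofReal_le_ofReal
        have e1 : min ε r0 ≤ b - a := by linarith
        have e2 : min ε r0 ≤ d - c := by linarith
        have := mul_le_mul e1 e2 hr.le (by linarith)
        linarith)
  have hle : volume O ≤ volume (⋃ a ∈ u, a.2.2) := by
    have h1 : O ⊆ (O \ ⋃ a ∈ u, a.2.2) ∪ ⋃ a ∈ u, a.2.2 := by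
      intro x hx
      by_cases h : x ∈ ⋃ a ∈ u, a.2.2
      · exact Or.inr h
      · exact Or.inl ⟨hx, h⟩
    calc volume O ≤ _ := measure_mono h1
      _ ≤ _ := measure_union_le _ _
      _ = _ := by rw [hnull, zero_add]
  rw [measure_biUnion hcount hpw (fun a ha => (huT ha).1.closed.measurableSet)] at hle
  have hlt := ht.trans_le hle
  rw [ENNReal.tsum_eq_iSup_sum, lt_iSup_iff] at hlt
  obtain ⟨S, hS⟩ := hlt
  refine ⟨u, S, fun a => a.1.2.2, fun a _ => (huT a.2).1, fun a _ => (huT a.2).2.1, ?_, hS⟩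
  intro i _ j _ hij
  exact hpw i.2 j.2 (fun h => hij (Subtype.ext h))

lemma main_grow {U B : Set (ℝ × ℝ)} (hU : IsOpen U) (cU : IsPreconnected U)
    (hB : IsSimpleRatPolyomino B) (hBU : B ⊆ U) (ρ : ℚ) (h1 : volume B < ENNReal.ofReal ρ)
    (h2 : ENNReal.ofReal ρ < volume U) :
    ∃ C, IsSimpleRatPolyomino C ∧ volume C = ENNReal.ofReal ρ ∧ B ⊆ C ∧ C ⊆ U := by
  obtain ⟨v, hv, hvol⟩ := hB.1.vol
  have hv' : (0:ℝ) ≤ v := by exact_mod_cast hv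
  rw [hvol] at h1
  have hvρ : (v:ℝ) < ρ := by
    by_contra hlt
    push Not at hlt
    exact absurd (ENNReal.ofReal_le_ofReal hlt) (not_le.2 h1)
  have hsum : ENNReal.ofReal v + ENNReal.ofReal (ρ - v) = ENNReal.ofReal ρ := by
    rw [← ENNReal.ofReal_add hv' (by linarith)]; congr 1; ring
  have hO : IsOpen (U \ B) := hU.sdiff hB.1.closed
  obtain ⟨ι, S, Q, hQ, hQO, hpw, hlt⟩ := vitali_fill hO (t := ENNReal.ofReal (ρ - v)) (by
    by_contra hle
    push Not at hle
    have : volume U ≤ volume B + volume (U \ B) := by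
      refine (measure_mono ?_).trans (measure_union_le _ _)
      intro x hx
      by_cases h : x ∈ B
      · exact Or.inl h
      · exact Or.inr ⟨hx, h⟩
    have h3 := this.trans (add_le_add_right hle _)
    rw [hvol, hsum] at h3
    exact absurd h3 (not_le.2 h2))
  have hdB : ∀ i ∈ S, Disjoint B (Q i) := by
    intro i hi
    rw [disjoint_left]
    intro x hx hxi
    exact (hQO i hi hxi).2 hx
  obtain ⟨P', hg, hPU, hQP⟩ := merge_list hU cU Q S B hB hBU hQ (fun i hi x hx => (hQO i hi hx).1)
    hdB hpw
  have hbig : ENNReal.ofReal ρ ≤ volume P' := by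
    have hsub : B ∪ ⋃ i ∈ S, Q i ⊆ P' := union_subset hg.2.1 (iUnion₂_subset hQP)
    refine le_trans ?_ (measure_mono hsub)
    rw [measure_union (by
        rw [disjoint_iUnion₂_right]; exact hdB)
      (S.measurableSet_biUnion (fun i hi => (hQ i hi).closed.measurableSet)),
      measure_biUnion_finset hpw (fun i hi => (hQ i hi).closed.measurableSet), hvol, ← hsum]
    exact add_le_add_right hlt.le _
  obtain ⟨C, c1, c2, c3, c4⟩ := hg.2.2 ρ (by rw [hvol]; exact h1.le) hbig
  exact ⟨C, c1, c4, c2, c3.trans hPU⟩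

/-- Lemma `poly`: given a simple rational polyomino `A` and pairwise
disjoint subsets `B, D₁, …, D_r` of its interior, each a simple rational polyomino or a
singleton, and a rational `ρ` with `ℒ B < ρ < ℒ(A \ ⋃ᵢ Dᵢ)`, there is a simple rational
polyomino `C` of area `ρ` with `B ⊆ C ⊆ A° \ ⋃ᵢ Dᵢ`. -/
theorem exists_simple_polyomino_between
    (A B : Set (ℝ × ℝ)) (r : ℕ) (D : Fin r → Set (ℝ × ℝ))
    (hA : IsSimpleRatPolyomino A)
    (hB : IsSimpleRatPolyomino B ∨ ∃ x, B = {x})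
    (hD : ∀ i, IsSimpleRatPolyomino (D i) ∨ ∃ x, D i = {x})
    (hBsub : B ⊆ interior A) (hDsub : ∀ i, D i ⊆ interior A)
    (hBD : ∀ i, Disjoint B (D i))
    (hDD : ∀ i j, i ≠ j → Disjoint (D i) (D j))
    (ρ : ℚ)
    (hρ₁ : volume B < ENNReal.ofReal (ρ : ℝ))
    (hρ₂ : ENNReal.ofReal (ρ : ℝ) < volume (A \ ⋃ i, D i)) :
    ∃ C : Set (ℝ × ℝ), IsSimpleRatPolyomino C ∧ volume C = ENNReal.ofReal (ρ : ℝ) ∧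
      B ⊆ C ∧ C ⊆ interior A \ ⋃ i, D i := by
  have hDc : ∀ i, IsClosed (D i) := by
    intro i
    rcases hD i with h | ⟨x, h⟩
    · exact h.1.closed
    · rw [h]; exact isClosed_singleton
  have hDcc : ∀ i, IsPreconnected (D i)ᶜ := by
    intro i
    rcases hD i with h | ⟨x, h⟩
    · exact h.2.2.isPreconnected
    · rw [h]
      exact (isConnected_compl_singleton_of_one_lt_rank (by
        rw [rank_prod', Module.rank_self]
        norm_num [one_add_one_eq_two]) x).isPreconnected
  have hcs := conn_sdiff isOpen_interior hA.2.1.isPreconnected D Finset.univ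
    (fun i _ => hDc i) (fun i _ => hDcc i) (fun i _ => hDsub i)
    (fun i _ j _ hij => hDD i j hij)
  simp only [Finset.mem_univ, iUnion_true] at hcs
  obtain ⟨hU, cU⟩ := hcs
  set U := interior A \ ⋃ i, D i with hUdef
  have hBU : B ⊆ U := by
    intro x hx
    refine ⟨hBsub hx, ?_⟩
    rw [mem_iUnion]
    rintro ⟨i, hi⟩
    exact disjoint_left.1 (hBD i) hx hi
  have hvolU : ENNReal.ofReal ρ < volume U := by
    refine hρ₂.trans_le ?_
    have : A \ ⋃ i, D i ⊆ U ∪ (A \ interior A) := by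
      rintro x ⟨hx, hx'⟩
      by_cases h : x ∈ interior A
      · exact Or.inl ⟨h, hx'⟩
      · exact Or.inr ⟨hx, h⟩
    calc _ ≤ _ := measure_mono this
      _ ≤ _ := measure_union_le _ _
      _ = _ := by rw [hA.1.null, add_zero]
  rcases hB with hB | ⟨x, rfl⟩
  · exact main_grow hU cU hB hBU ρ hρ₁ hvolU
  · have hxU : x ∈ U := hBU rfl
    have hρ : (0:ℝ) < ρ := ENNReal.ofReal_pos.1 (lt_of_le_of_lt zero_le hρ₁)
    obtain ⟨r0, hr0, hbox⟩ := box_nhds hU hxU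
    have hs : 0 < min r0 (min 1 ((ρ:ℝ) / 8)) := lt_min hr0 (lt_min one_pos (by linarith))
    obtain ⟨a, b, c, d, hab, hcd, h1, h2, h3, h4, h5, h6, h7, h8⟩ := small_rect x hs
    have m1 := min_le_left r0 (min 1 ((ρ:ℝ) / 8))
    have m2 := (min_le_right r0 (min 1 ((ρ:ℝ) / 8))).trans (min_le_left _ _)
    have m3 := (min_le_right r0 (min 1 ((ρ:ℝ) / 8))).trans (min_le_right _ _)
    have hR : IsRatRect (Icc (a:ℝ) b ×ˢ Icc (c:ℝ) d) := ⟨a, b, c, d, hab, hcd, rfl⟩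
    obtain ⟨C, c1, c2, c3, c4⟩ := main_grow hU cU (rect_simple hR) (by
      refine Subset.trans (prod_mono ?_ ?_) hbox
      · intro y hy; exact ⟨by linarith [hy.1], by linarith [hy.2]⟩
      · intro y hy; exact ⟨by linarith [hy.1], by linarith [hy.2]⟩) ρ (by
      rw [rect_vol (by exact_mod_cast hab.le), ENNReal.ofReal_lt_ofReal_iff hρ]
      have e1 : (b:ℝ) - a ≤ 2 := by linarith
      have e2 : (d:ℝ) - c ≤ ρ / 4 := by linarith
      have := mul_le_mul e1 e2 (by linarith) (by norm_num)
      linarith) hvolU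
    refine ⟨C, c1, c2, Subset.trans ?_ c3, c4⟩
    rintro _ rfl
    exact ⟨⟨by linarith, by linarith⟩, by linarith, by linarith⟩
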